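/- arXiv:2003.07817 — 3 statements merged into one kernel-verified Lean document; each statement's English description precedes it below -/
import Mathlib

section
/- Let X ⊆ Z^d be finite with conv(X) ∩ Z^d = X and suppose dim(X) ≥ (k-1)·2^k for some integer k ≥ 2. Then any polyhedron P with P ∩ Z^d = X has more than k facets; equivalently, rc(X) ≥ k+1. -/
/-!
The theorem combines a Dirichlet-type approximation argument with a pigeonhole argument.

Approximation (`infinite_of_slack`): if `r ≥ 1` and `ℓ ≤ r`, then `ℓ` real linear forms on `ℤ^r`
with positive bounds `s i` always admit infinitely many `c ∈ ℤ^r` with `φ i c ≤ s i` for all `i`.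
Indeed, `ℓ - 1 < r` of the forms can be made simultaneously arbitrarily small at a nonzero
integer vector (`exists_small`: otherwise `ℤ^r` would embed as a discrete subgroup of `ℝ^(ℓ-1)`),
and replacing `c` by `-c` if necessary makes the last form nonpositive.

Pigeonhole (`not_isRelaxation`): suppose that `X` is finite and cut out by `q ≤ k` inequalities and
some equations, and choose `dim X + 1` affinely independent points of `X`. Moving from a point `x`
of `X` along integer directions in which the inequalities tight at `x` stay tight, only the other
inequalities matter, and these have positive slack at `x`; so finiteness of `X` limits the number
of independent directions of this kind. A point without tight inequalities is excluded since
`dim X ≥ k`. Hence the chosen points are distributed among fewer than `2 ^ k` nonempty tight sets,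
and `k` of them share one, which provides `k - 1 ≥ 1` independent directions for at most `k - 1`
slack inequalities: too many.

Since `rc` is an infimum in `ℕ`, it also matters that some relaxation exists
(`exists_isRelaxation`): a box containing `X`, together with one separating inequality for each
of the finitely many integer points of the box outside `X`.
-/

/-- Coercion of an integer point to a real point. -/
def ZtoR {d : ℕ} (x : Fin d → ℤ) : Fin d → ℝ := fun i => (x i : ℝ)

/-- `X ⊆ ℤ^d` is lattice-convex if `conv(X) ∩ ℤ^d = X`. -/
def IsLatticeConvex {d : ℕ} (X : Set (Fin d → ℤ)) : Prop :=
  ∀ z : Fin d → ℤ, ZtoR z ∈ convexHull ℝ (ZtoR '' X) → z ∈ X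

/-- `X` is described within `ℤ^d` by a system of `k` real linear inequalities
(together with finitely many linear equations). -/
def IsRelaxation {d : ℕ} (X : Set (Fin d → ℤ)) (k : ℕ) : Prop :=
  ∃ (m : ℕ) (A : Fin k → Fin d → ℝ) (b : Fin k → ℝ) (U : Fin m → Fin d → ℝ) (v : Fin m → ℝ),
    X = {x : Fin d → ℤ |
      (∀ i, ∑ j, A i j * (x j : ℝ) ≤ b i) ∧ ∀ i, ∑ j, U i j * (x j : ℝ) = v i}

/-- The relaxation complexity of `X` within `ℤ^d`. -/
noncomputable def rc {d : ℕ} (X : Set (Fin d → ℤ)) : ℕ := sInf {k | IsRelaxation X k}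

/-- `X` is described within `ℤ^d` by a system of `k` rational linear inequalities
(together with finitely many rational linear equations). -/
def IsRelaxationQ {d : ℕ} (X : Set (Fin d → ℤ)) (k : ℕ) : Prop :=
  ∃ (m : ℕ) (A : Fin k → Fin d → ℚ) (b : Fin k → ℚ) (U : Fin m → Fin d → ℚ) (v : Fin m → ℚ),
    X = {x : Fin d → ℤ |
      (∀ i, ∑ j, A i j * (x j : ℚ) ≤ b i) ∧ ∀ i, ∑ j, U i j * (x j : ℚ) = v i}

/-- The rational relaxation complexity of `X` within `ℤ^d`. -/
noncomputable def rcQ {d : ℕ} (X : Set (Fin d → ℤ)) : ℕ := sInf {k | IsRelaxationQ X k}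

/-- The dimension of `X`, i.e. the dimension of its affine hull. -/
noncomputable def dimX {d : ℕ} (X : Set (Fin d → ℤ)) : ℕ :=
  Module.finrank ℝ (affineSpan ℝ (ZtoR '' X)).direction

/-! ### Small values of linear forms at integer points -/

/-- Fewer real linear forms than variables can be made simultaneously small at a nonzero
integer point. -/
lemma exists_small {κ ι : Type*} [Fintype κ] [Fintype ι] (h : Fintype.card ι < Fintype.card κ)
    (φ : (κ → ℤ) →ₗ[ℤ] (ι → ℝ)) {ε : ℝ} (hε : 0 < ε) :
    ∃ c : κ → ℤ, c ≠ 0 ∧ ∀ i, |φ c i| < ε := by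
  classical
  by_contra! hcon
  -- Otherwise `φ` is injective with discrete image, so its image has `ℤ`-rank at most `card ι`.
  have hbig : ∀ c : κ → ℤ, c ≠ 0 → ε ≤ ‖φ c‖ := by
    intro c hc
    obtain ⟨i, hi⟩ := hcon c hc
    exact hi.trans (norm_le_pi_norm (φ c) i)
  have hinj : Function.Injective φ := by
    rw [injective_iff_map_eq_zero]
    intro c hc
    by_contra hne
    have := hbig c hne
    rw [hc, norm_zero] at this
    linarith
  let b : κ → (ι → ℝ) := fun t => φ (Pi.single t 1)
  have hspan : Submodule.span ℤ (Set.range b) = LinearMap.range φ := by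
    have : Set.range b = φ '' Set.range (Pi.basisFun ℤ κ) := by
      rw [← Set.range_comp]
      congr 1
    rw [this, Submodule.span_image, (Pi.basisFun ℤ κ).span_eq, Submodule.map_top]
  have hdisc : DiscreteTopology (Submodule.span ℤ (Set.range b)) := by
    refine DiscreteTopology.of_forall_le_norm hε ?_
    rintro ⟨x, hx⟩ hne
    rw [hspan] at hx
    obtain ⟨c, rfl⟩ := hx
    refine hbig c ?_
    rintro rfl
    exact hne (by ext; simp)
  have h1 := Real.finrank_eq_int_finrank_of_discrete hdisc
  have h2 : Set.finrank ℤ (Set.range b) = Fintype.card κ := by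
    rw [Set.finrank, hspan, LinearMap.finrank_range_of_inj hinj, Module.finrank_fintype_fun_eq_card]
  have h3 : Set.finrank ℝ (Set.range b) ≤ Fintype.card ι := by
    have := Submodule.finrank_le (Submodule.span ℝ (Set.range b))
    rwa [Module.finrank_fintype_fun_eq_card] at this
  omega

/-- With as many one-sided constraints as variables, one form is made nonpositive by the choice of
sign and only the others need to be small. -/
lemma exists_le {κ ι : Type*} [Fintype κ] [Nonempty κ] [Fintype ι]
    (h : Fintype.card ι ≤ Fintype.card κ) (φ : ι → (κ → ℤ) →ₗ[ℤ] ℝ) {ε : ℝ} (hε : 0 < ε) :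
    ∃ c : κ → ℤ, c ≠ 0 ∧ ∀ i, φ i c ≤ ε := by
  classical
  rcases isEmpty_or_nonempty ι with hι | ⟨⟨j⟩⟩
  · exact ⟨fun _ => 1, fun h0 => one_ne_zero (congrFun h0 (Classical.arbitrary κ)),
      fun i => isEmptyElim i⟩
  have hlt : Fintype.card {i : ι // i ≠ j} < Fintype.card κ :=
    (Fintype.card_subtype_lt (p := fun i => i ≠ j) (x := j) (by simp)).trans_le h
  obtain ⟨c, hc, hsmall⟩ := exists_small hlt
    (LinearMap.pi fun i : {i : ι // i ≠ j} => φ i) hε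
  have hs : ∀ i, i ≠ j → |φ i c| < ε := fun i hi => hsmall ⟨i, hi⟩
  rcases le_total (φ j c) 0 with hj | hj
  · refine ⟨c, hc, fun i => ?_⟩
    by_cases hi : i = j
    · subst hi; linarith
    · exact (le_abs_self _).trans (hs i hi).le
  · refine ⟨-c, neg_ne_zero.mpr hc, fun i => ?_⟩
    rw [map_neg]
    by_cases hi : i = j
    · subst hi; linarith
    · exact (neg_le_abs _).trans (hs i hi).le

/-- At most as many strictly slack inequalities as variables cannot bound the set of integer
solutions. -/
lemma infinite_of_slack {κ ι : Type*} [Fintype κ] [Nonempty κ] [Fintype ι]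
    (h : Fintype.card ι ≤ Fintype.card κ) (φ : ι → (κ → ℤ) →ₗ[ℤ] ℝ) (s : ι → ℝ)
    (hs : ∀ i, 0 < s i) : {c : κ → ℤ | ∀ i, φ i c ≤ s i}.Infinite := by
  intro hfin
  -- No nonzero `c` satisfies `φ i c ≤ 0` for all `i`, as its multiples would all be solutions.
  have hpos : ∀ c : κ → ℤ, c ≠ 0 → ∃ i, 0 < φ i c := by
    intro c hc
    by_contra! hle
    refine Set.infinite_of_injective_forall_mem (f := fun n : ℕ => n • c) ?_ ?_ hfin
    · intro m n hmn
      obtain ⟨t, ht⟩ := Function.ne_iff.mp hc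
      have := congrFun hmn t
      simp only [Pi.smul_apply, nsmul_eq_mul] at this
      exact_mod_cast mul_right_cancel₀ ht this
    · intro n i
      rw [map_nsmul, nsmul_eq_mul]
      exact (mul_nonpos_of_nonneg_of_nonpos n.cast_nonneg (hle i)).trans (hs i).le
  -- Hence for small `ε` no nonzero solution `c` satisfies `φ i c ≤ ε` for all `i`.
  have hev : ∀ᶠ ε : ℝ in nhdsWithin 0 (Set.Ioi 0),
      ∀ c ∈ {c : κ → ℤ | ∀ i, φ i c ≤ s i}, c ≠ 0 → ∃ i, ε < φ i c := by
    rw [Filter.eventually_all_finite hfin]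
    intro c _
    by_cases hc : c = 0
    · exact Filter.Eventually.of_forall fun _ h0 => absurd hc h0
    · obtain ⟨i, hi⟩ := hpos c hc
      filter_upwards [mem_nhdsWithin_of_mem_nhds (Iio_mem_nhds hi)] with ε hε _
      exact ⟨i, hε⟩
  have hev2 : ∀ᶠ ε : ℝ in nhdsWithin 0 (Set.Ioi 0), ∀ i, ε < s i := by
    rw [Filter.eventually_all]
    intro i
    exact mem_nhdsWithin_of_mem_nhds (Iio_mem_nhds (hs i))
  obtain ⟨ε, ⟨h1, h2⟩, hε⟩ := ((hev.and hev2).and self_mem_nhdsWithin).exists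
  obtain ⟨c, hc, hle⟩ := exists_le h φ hε
  obtain ⟨i, hi⟩ := h1 c (fun i => (hle i).trans (h2 i).le) hc
  exact absurd (hle i) (not_le.mpr hi)

/-! ### Directions that preserve the tight inequalities -/

/-- Evaluation of the form `a` at a variable integer combination of the integer vectors `g t`. -/
def combForm {d : ℕ} {κ : Type*} [Fintype κ] (g : κ → Fin d → ℤ) (a : Fin d → ℝ) :
    (κ → ℤ) →ₗ[ℤ] ℝ where
  toFun c := ∑ j, a j * ((∑ t, c t * g t j : ℤ) : ℝ)
  map_add' c c' := by
    simp only [Pi.add_apply, add_mul, Finset.sum_add_distrib, Int.cast_add, mul_add]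
  map_smul' n c := by
    simp only [Pi.smul_apply, smul_eq_mul, mul_assoc, ← Finset.mul_sum, Int.cast_mul,
      RingHom.id_apply, zsmul_eq_mul]
    rw [Finset.mul_sum]
    exact Finset.sum_congr rfl fun j _ => by ring

lemma combForm_eq_zero {d : ℕ} {κ : Type*} [Fintype κ] (g : κ → Fin d → ℤ) (a : Fin d → ℝ)
    (h : ∀ t, ∑ j, a j * (g t j : ℝ) = 0) (c : κ → ℤ) : combForm g a c = 0 := by
  change ∑ j, a j * ((∑ t, c t * g t j : ℤ) : ℝ) = 0
  push_cast
  simp only [Finset.mul_sum]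
  rw [Finset.sum_comm]
  refine Finset.sum_eq_zero fun t _ => ?_
  rw [← mul_zero (c t : ℝ), ← h t, Finset.mul_sum]
  exact Finset.sum_congr rfl fun j _ => by ring

lemma sum_add_comb {d : ℕ} {κ : Type*} [Fintype κ] (g : κ → Fin d → ℤ) (a : Fin d → ℝ)
    (x : Fin d → ℤ) (c : κ → ℤ) :
    ∑ j, a j * ((x j + ∑ t, c t * g t j : ℤ) : ℝ) = ∑ j, a j * (x j : ℝ) + combForm g a c := by
  change _ = _ + ∑ j, a j * ((∑ t, c t * g t j : ℤ) : ℝ)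
  rw [← Finset.sum_add_distrib]
  exact Finset.sum_congr rfl fun j _ => by push_cast; ring

/-- A finite set of integer points cut out by linear constraints does not contain affinely
independent points `p t`, `t ∈ T`, on which all constraints outside `J` are tight, if some `p t₀`
is strictly inside the constraints of `J` and `2 ≤ #T`, `#J + 1 ≤ #T`. -/
lemma false_of_tight {d q m : ℕ} {X : Set (Fin d → ℤ)} (hfin : X.Finite)
    {A : Fin q → Fin d → ℝ} {b : Fin q → ℝ} {U : Fin m → Fin d → ℝ} {v : Fin m → ℝ}
    (hX : X = {x : Fin d → ℤ |
      (∀ i, ∑ j, A i j * (x j : ℝ) ≤ b i) ∧ ∀ i, ∑ j, U i j * (x j : ℝ) = v i})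
    {τ : Type*} (p : τ → Fin d → ℤ) (hp : AffineIndependent ℝ (fun t => ZtoR (p t)))
    (hpX : ∀ t, p t ∈ X) (T : Finset τ) (t₀ : τ) (ht₀ : t₀ ∈ T) (J : Finset (Fin q))
    (hJ : ∀ i ∈ J, ∑ j, A i j * (p t₀ j : ℝ) < b i)
    (hJc : ∀ i ∉ J, ∀ t ∈ T, ∑ j, A i j * (p t j : ℝ) = b i)
    (hT2 : 2 ≤ T.card) (hTJ : J.card + 1 ≤ T.card) : False := by
  classical
  let κ := {t : τ // t ∈ T.erase t₀}
  have hcard : Fintype.card κ = T.card - 1 := by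
    rw [Fintype.card_coe, Finset.card_erase_of_mem ht₀]
  have hne : Nonempty κ := Fintype.card_pos_iff.mp (by omega)
  let g : κ → Fin d → ℤ := fun t j => p t j - p t₀ j
  have hli : LinearIndependent ℝ (fun t : κ => ZtoR (g t)) := by
    have h1 := (affineIndependent_iff_linearIndependent_vsub ℝ _ t₀).mp hp
    have h2 := h1.comp (fun t : κ => ⟨t.1, (Finset.mem_erase.mp t.2).1⟩)
      (fun s t hst => Subtype.ext (by simpa using hst))
    have h3 : (fun t : κ => ZtoR (g t)) = fun t : κ => ZtoR (p t.1) - ZtoR (p t₀) := by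
      ext t j
      simp [ZtoR, g]
    rw [h3]
    exact h2
  have hconst : ∀ (a : Fin d → ℝ) (β : ℝ), (∀ t ∈ T, ∑ j, a j * (p t j : ℝ) = β) →
      ∀ c, combForm g a c = 0 := by
    intro a β h
    refine combForm_eq_zero g a fun t => ?_
    have h1 := h t.1 (Finset.mem_erase.mp t.2).2
    have h2 := h t₀ ht₀
    simp only [g, Int.cast_sub, mul_sub, Finset.sum_sub_distrib]
    linarith
  have hinf := infinite_of_slack (κ := κ) (ι := J) (by rw [Fintype.card_coe, hcard]; omega)
    (fun i => combForm g (A i)) (fun i => b i - ∑ j, A i j * (p t₀ j : ℝ))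
    (fun i => sub_pos.mpr (hJ i i.2))
  have hpX' : ∀ t, (∀ i, ∑ j, A i j * (p t j : ℝ) ≤ b i) ∧ ∀ i, ∑ j, U i j * (p t j : ℝ) = v i := by
    intro t
    have := hpX t
    rwa [hX] at this
  refine hinf (Set.Finite.of_finite_image (f := fun c j => p t₀ j + ∑ t, c t * g t j)
    (hfin.subset ?_) ?_)
  · rintro _ ⟨c, hc, rfl⟩
    rw [hX]
    refine ⟨fun i => ?_, fun i => ?_⟩
    · rw [sum_add_comb]
      by_cases hi : i ∈ J
      · have := hc ⟨i, hi⟩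
        simp only at this
        linarith
      · rw [hconst (A i) (b i) (hJc i hi) c, hJc i hi t₀ ht₀, add_zero]
    · rw [sum_add_comb, hconst (U i) (v i) (fun t _ => (hpX' t).2 i) c, (hpX' t₀).2 i, add_zero]
  · intro c _ c' _ hcc
    have hz : ∑ t, ((c t - c' t : ℤ) : ℝ) • ZtoR (g t) = 0 := by
      ext j
      have h1 : p t₀ j + ∑ t, c t * g t j = p t₀ j + ∑ t, c' t * g t j := congrFun hcc j
      have h2 : ∑ t, (c t - c' t) * g t j = 0 := by
        simp only [sub_mul, Finset.sum_sub_distrib]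
        linarith
      simp only [Finset.sum_apply, Pi.smul_apply, ZtoR, smul_eq_mul, Pi.zero_apply]
      exact_mod_cast h2
    ext t
    have := Fintype.linearIndependent_iff.mp hli _ hz t
    have : c t - c' t = 0 := by exact_mod_cast this
    omega

/-! ### Pigeonhole on the sets of tight inequalities -/

/-- The `dim X + 1` affinely independent points span the affine hull of `X`. `X` has to be
nonempty, which follows from `0 < dimX X`. -/
lemma exists_points {d : ℕ} {X : Set (Fin d → ℤ)} (hfin : X.Finite) (hpos : 0 < dimX X) :
    ∃ p : Fin (dimX X + 1) → Fin d → ℤ,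
      AffineIndependent ℝ (fun t => ZtoR (p t)) ∧ ∀ t, p t ∈ X := by
  obtain ⟨t, htX, hspan, hind⟩ := exists_affineIndependent ℝ (Fin d → ℝ) (ZtoR '' X)
  have : Fintype t := ((hfin.image ZtoR).subset htX).fintype
  have hdim : dimX X = Module.finrank ℝ (vectorSpan ℝ (Set.range ((↑) : t → Fin d → ℝ))) := by
    rw [dimX, ← hspan, direction_affineSpan, Subtype.range_coe]
  have hne : Nonempty t := by
    by_contra hemp
    rw [not_nonempty_iff] at hemp
    rw [hdim, Set.range_eq_empty, vectorSpan_empty, finrank_bot] at hpos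
    exact lt_irrefl _ hpos
  have hcard : Fintype.card t = dimX X + 1 := by
    rw [hdim, hind.finrank_vectorSpan_add_one]
  choose p hpX hp using fun x : t => htX x.2
  let e := (Fintype.equivFinOfCardEq hcard).symm
  refine ⟨fun i => p (e i), ?_, fun i => hpX _⟩
  simp only [hp]
  exact hind.comp_embedding e.toEmbedding

/-- In high dimension, `q ≤ k` inequalities do not suffice. -/
lemma not_isRelaxation {d : ℕ} {X : Set (Fin d → ℤ)} (hfin : X.Finite) {k q : ℕ} (hk : 2 ≤ k)
    (hdim : (k - 1) * 2 ^ k ≤ dimX X) (hq : q ≤ k) : ¬ IsRelaxation X q := by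
  classical
  rintro ⟨m, A, b, U, v, hX⟩
  have hkn : k < dimX X := by
    calc k < 2 ^ k := Nat.lt_two_pow_self
      _ ≤ (k - 1) * 2 ^ k := Nat.le_mul_of_pos_left _ (by omega)
      _ ≤ _ := hdim
  obtain ⟨p, hp, hpX⟩ := exists_points hfin (by omega)
  let tight : Fin (dimX X + 1) → Finset (Fin q) :=
    fun t => Finset.univ.filter fun i => ∑ j, A i j * (p t j : ℝ) = b i
  have hmem : ∀ t i, i ∈ tight t ↔ ∑ j, A i j * (p t j : ℝ) = b i := fun t i => by simp [tight]
  have hslack : ∀ t, ∀ i ∈ (tight t)ᶜ, ∑ j, A i j * (p t j : ℝ) < b i := by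
    intro t i hi
    have h1 := hpX t
    rw [hX] at h1
    rw [Finset.mem_compl, hmem] at hi
    exact lt_of_le_of_ne (h1.1 i) hi
  by_cases hempty : ∃ t, tight t = ∅
  · obtain ⟨t, ht⟩ := hempty
    refine false_of_tight hfin hX p hp hpX Finset.univ t (Finset.mem_univ _) (tight t)ᶜ
      (hslack t) ?_ ?_ ?_
    · intro i hi
      simp [ht] at hi
    · simp only [Finset.card_univ, Fintype.card_fin]; omega
    · simp only [ht, Finset.compl_empty, Finset.card_univ, Fintype.card_fin]; omega
  · push Not at hempty
    -- There are `2 ^ q - 1` nonempty tight sets, so `k` of the points share one.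
    have hcard : (Finset.univ.erase (∅ : Finset (Fin q))).card * (k - 1)
        < (Finset.univ : Finset (Fin (dimX X + 1))).card := by
      rw [Finset.card_erase_of_mem (Finset.mem_univ _), Finset.card_univ, Fintype.card_finset,
        Fintype.card_fin, Finset.card_univ, Fintype.card_fin]
      calc (2 ^ q - 1) * (k - 1) ≤ 2 ^ k * (k - 1) :=
            Nat.mul_le_mul_right _ ((Nat.sub_le _ _).trans (Nat.pow_le_pow_right two_pos hq))
        _ = (k - 1) * 2 ^ k := mul_comm _ _
        _ < _ := by omega
    obtain ⟨I, hI, hfib⟩ := Finset.exists_lt_card_fiber_of_mul_lt_card_of_maps_to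
      (f := tight) (fun t _ => Finset.mem_erase.mpr ⟨(hempty t).ne_empty, Finset.mem_univ _⟩) hcard
    obtain ⟨t₀, ht₀⟩ := Finset.card_pos.mp (by omega : 0 < (Finset.univ.filter
      fun t => tight t = I).card)
    have hI0 : 0 < I.card := by
      rw [Finset.card_pos, Finset.nonempty_iff_ne_empty]
      exact (Finset.mem_erase.mp hI).1
    have ht₀' : tight t₀ = I := by simpa using ht₀
    refine false_of_tight hfin hX p hp hpX (Finset.univ.filter fun t => tight t = I) t₀ ht₀
      (tight t₀)ᶜ (hslack t₀) ?_ (by omega) ?_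
    · intro i hi t ht
      rw [Finset.notMem_compl, ht₀'] at hi
      rw [Finset.mem_filter] at ht
      rw [← hmem, ht.2]
      exact hi
    · have := Finset.card_compl_add_card I
      rw [Fintype.card_fin] at this
      rw [ht₀']
      omega

/-! ### Existence of a relaxation -/

/-- Without this, `rc X` could be the junk value `sInf ∅ = 0`. -/
lemma exists_isRelaxation {d : ℕ} {X : Set (Fin d → ℤ)} (hfin : X.Finite)
    (hlc : IsLatticeConvex X) : ∃ q, IsRelaxation X q := by
  classical
  obtain ⟨hi, hhi⟩ := hfin.bddAbove
  obtain ⟨lo, hlo⟩ := hfin.bddBelow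
  let Z : Set (Fin d → ℤ) := Set.Icc lo hi \ X
  have hZ : Finite Z := ((Set.finite_Icc lo hi).subset Set.sdiff_subset).to_subtype
  have : Fintype Z := Fintype.ofFinite Z
  have hsep : ∀ z : Z, ∃ (a : Fin d → ℝ) (u : ℝ), (∀ x ∈ X, ∑ j, a j * (x j : ℝ) ≤ u) ∧
      u < ∑ j, a j * (z.1 j : ℝ) := by
    intro z
    have hz : ZtoR z.1 ∉ convexHull ℝ (ZtoR '' X) := fun h => z.2.2 (hlc _ h)
    obtain ⟨f, u, h1, h2⟩ := geometric_hahn_banach_closed_point (convex_convexHull ℝ (ZtoR '' X))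
      ((hfin.image ZtoR).isClosed_convexHull ℝ) hz
    have hf : ∀ x : Fin d → ℝ, f x = ∑ j, f (Pi.single j 1) * x j := by
      intro x
      have := LinearMap.pi_apply_eq_sum_univ (f : (Fin d → ℝ) →ₗ[ℝ] ℝ) x
      simp only [ContinuousLinearMap.coe_coe, smul_eq_mul] at this
      rw [this]
      refine Finset.sum_congr rfl fun j _ => ?_
      rw [mul_comm]
      congr 2
      ext i
      simp [Pi.single_apply, eq_comm]
    refine ⟨fun j => f (Pi.single j 1), u, fun x hx => ?_, ?_⟩
    · have := h1 _ (subset_convexHull ℝ _ ⟨x, hx, rfl⟩)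
      rw [hf] at this
      exact this.le
    · rw [hf] at h2
      exact h2
  choose a u ha hu using hsep
  let ι := Fin d ⊕ Fin d ⊕ Z
  let A : ι → Fin d → ℝ := Sum.elim (fun i => Pi.single i 1) (Sum.elim (fun i => Pi.single i (-1)) a)
  let b : ι → ℝ := Sum.elim (fun i => (hi i : ℝ)) (Sum.elim (fun i => -(lo i : ℝ)) u)
  have key : ∀ x : Fin d → ℤ, x ∈ X ↔ ∀ i : ι, ∑ j, A i j * (x j : ℝ) ≤ b i := by
    intro x
    constructor
    · rintro hx (i | i | z)
      · simpa [A, b, Pi.single_apply] using hhi hx i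
      · simpa [A, b, Pi.single_apply] using hlo hx i
      · exact ha z x hx
    · intro h
      by_contra hx
      have h1 : ∀ i, x i ≤ hi i := fun i => by
        simpa [A, b, Pi.single_apply] using h (Sum.inl i)
      have h2 : ∀ i, lo i ≤ x i := fun i => by
        simpa [A, b, Pi.single_apply] using h (Sum.inr (Sum.inl i))
      exact absurd (h (Sum.inr (Sum.inr ⟨x, ⟨h2, h1⟩, hx⟩))) (not_le.mpr (hu ⟨x, ⟨h2, h1⟩, hx⟩))
  let e := (Fintype.equivFin ι).symm
  refine ⟨Fintype.card ι, 0, fun i => A (e i), fun i => b (e i), Fin.elim0, Fin.elim0, ?_⟩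
  ext x
  rw [key, ← e.forall_congr_right]
  exact ⟨fun h => ⟨h, fun i => i.elim0⟩, fun h => h.1⟩

/-- If `X ⊆ ℤ^d` is finite and lattice-convex with `dim(X) ≥ (k-1)·2^k` for some `k ≥ 2`,
then `rc(X) ≥ k+1`. -/
theorem rc_ge_of_dim_ge_weak {d : ℕ} (X : Set (Fin d → ℤ)) (hfin : X.Finite)
    (hlc : IsLatticeConvex X) (k : ℕ) (hk : 2 ≤ k)
    (hdim : (k - 1) * 2 ^ k ≤ dimX X) :
    k + 1 ≤ rc X := by
  by_contra hlt
  exact not_isRelaxation hfin hk hdim (by omega : rc X ≤ k)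
    (Nat.sInf_mem (exists_isRelaxation hfin hlc))
end

section
/- Let X ⊆ Z^d be a finite lattice-convex set such that conv(X) contains a lattice point in its interior. Then obs(X) ⊆ X + c_d · conv(X − X), where c_d = d(2d+1)(s_{2d+1} − 1) and (s_i) is the Sylvester sequence (s_1 = 2, s_i = 1 + s_1·…·s_{i−1}). In particular, obs(X) is finite. -/
/-!
Write `P = conv X`, let `y` be an observer of `X` and put `B = (4(n+1))^(2^n-1)` with `n ≤ d`.

It suffices to find a lattice point `w ≠ y` of `conv (X ∪ {y})` that is a convex combination
`w = a y + (1 - a) p` with `p ∈ P` and `a` bounded below by `1 / (c_d + 1)`: since `X ∪ {y}` is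
lattice-convex, `w ∈ X`, and `y - w = ((1 - a) / a) (w - p)` lies in `c_d • conv (X - X)`.
Only this one direction matters, so no bound on the asymmetry of `conv (X ∪ {y})` with respect to
a single lattice point is needed.

An interior lattice point `z` of `P` gives such a combination with some weight `a > 0` on `y` and
weights on `n ≤ d` further points of `X` (`exists_representation`, by a Carathéodory argument for
cones with apex `y`). The weight on `y` is then increased by Diophantine approximation. If `l` is
the weight vector, subtracting an integer vector `m` with sum `j` from `(j + 1) l` gives
another affine combination that is a lattice point. Pigeonhole with boxes of side about `l i / 2`
keeps the coordinates `i` in a set `S` nonnegative with `j` at most about `∏ i ∈ S, 2 / l i`; the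
coordinates outside `S` are left unrounded, which is harmless as long as
`(∏ i ∈ S, 2 / l i) * ∑ i ∉ S, l i` is at most `1 / 2`. If no admissible `S` omitting `y` exists,
growing `S` greedily shows that `a > 1 / (2B)` already (`exists_large_coords`). Otherwise the
weight of `y` at least doubles (`exists_multiple`). Near the supremum of all attainable weights it
cannot double, so some attainable weight exceeds `1 / (2B)` (`exists_large_coefficient`).

Finally `2B ≤ c_d + 1` (`two_mul_pow_le_cSylv`): when `d` grows by one, `sylv (2 * d) - 1` is
raised at least to its fourth power, which outgrows `(4(d+1))^(2^d)`.
-/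

open scoped Pointwise

/-- The set of observers of `X`: points `y ∈ ℤ^d \ X` such that `X ∪ {y}` is lattice-convex. -/
def obs {d : ℕ} (X : Set (Fin d → ℤ)) : Set (Fin d → ℤ) :=
  {y | y ∉ X ∧ IsLatticeConvex (X ∪ {y})}

/-- The Sylvester sequence, indexed so that `sylv 0 = s₁ = 2` and
`s_{i+1} = s_i·(s_i − 1) + 1 = 1 + s₁⋯s_i`. -/
def sylv : ℕ → ℕ
  | 0 => 2
  | n + 1 => sylv n * (sylv n - 1) + 1

/-- The constant `c_d = d(2d+1)(s_{2d+1} − 1)`. -/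
def cSylv (d : ℕ) : ℕ := d * (2 * d + 1) * (sylv (2 * d) - 1)

/-! ### Diophantine approximation of weight vectors -/

/-- Simultaneous Dirichlet approximation with a separate tolerance `1 / N i` in each coordinate. -/
theorem dirichlet_box {ι : Type*} [Fintype ι] (l : ι → ℝ) (N : ι → ℕ) (hN : ∀ i, 0 < N i) :
    ∃ j : ℕ, 1 ≤ j ∧ j ≤ ∏ i, N i ∧ ∃ m : ι → ℤ, ∀ i, |(j : ℝ) * l i - m i| < 1 / (N i : ℝ) := by
  classical
  -- pigeonhole: sort the fractional parts of `j * l` into `∏ i, N i` boxes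
  have hcard : (Fintype.piFinset fun i => Finset.range (N i)).card
      < (Finset.range (∏ i, N i + 1)).card := by
    simp [Fintype.card_piFinset]
  obtain ⟨a, ha, b, hb, hab, heq⟩ := Finset.exists_ne_map_eq_of_card_lt_of_maps_to hcard
    (f := fun j : ℕ => fun i => ⌊Int.fract ((j : ℝ) * l i) * N i⌋₊) (by
      intro j _
      simp only [Fintype.coe_piFinset, Set.mem_pi, Set.mem_univ, forall_true_left,
        Finset.coe_range, Set.mem_Iio]
      intro i
      have hNi : (0 : ℝ) < N i := by exact_mod_cast hN i
      rw [Nat.floor_lt (mul_nonneg (Int.fract_nonneg _) hNi.le)]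
      nlinarith [Int.fract_lt_one ((j : ℝ) * l i)])
  wlog hlt : a < b generalizing a b
  · exact this b hb a ha hab.symm heq.symm (by omega)
  refine ⟨b - a, by omega, ?_, fun i => ⌊(b : ℝ) * l i⌋ - ⌊(a : ℝ) * l i⌋, fun i => ?_⟩
  · simp only [Finset.mem_range] at hb; omega
  have hNi : (0 : ℝ) < N i := by exact_mod_cast hN i
  have h1 := congrFun heq i
  have a1 := Nat.floor_le (mul_nonneg (Int.fract_nonneg ((a : ℝ) * l i)) hNi.le)
  have a2 := Nat.lt_floor_add_one (Int.fract ((a : ℝ) * l i) * N i)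
  have b1 := Nat.floor_le (mul_nonneg (Int.fract_nonneg ((b : ℝ) * l i)) hNi.le)
  have b2 := Nat.lt_floor_add_one (Int.fract ((b : ℝ) * l i) * N i)
  rw [h1] at a1 a2
  have e : ((b - a : ℕ) : ℝ) * l i - ((⌊(b : ℝ) * l i⌋ - ⌊(a : ℝ) * l i⌋ : ℤ) : ℝ)
      = Int.fract ((b : ℝ) * l i) - Int.fract ((a : ℝ) * l i) := by
    rw [Nat.cast_sub hlt.le]; push_cast
    simp only [Int.fract]; ring
  rw [e, lt_div_iff₀ hNi, ← abs_of_pos hNi, ← abs_mul, abs_lt]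
  constructor <;> nlinarith

/-- If the weight of `o` is small, some set `S` of coordinates avoiding `o` carries almost all the
weight, relative to the number of Dirichlet boxes needed to approximate `l` on `S` to within
`l i / 2`. As long as a set fails to do so, a coordinate outside it is large and can be added; the
number of boxes is then roughly squared, which gives the exponents `2 ^ k - 1`. -/
theorem exists_large_coords {ι : Type*} [Fintype ι] [DecidableEq ι] (o : ι) (n : ℕ)
    (hn : Fintype.card ι = n + 1) (l : ι → ℝ) (hl : ∀ i, 0 ≤ l i) 
    (ho : 0 < l o) (hsmall : 2 * ((4 * (n + 1)) ^ (2 ^ n - 1) : ℕ) * l o ≤ 1) :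
    ∃ S : Finset ι, o ∉ S ∧ (∀ i ∈ S, 0 < l i) ∧
      ((∏ i ∈ S, ⌈2 / l i⌉₊ : ℕ) : ℝ) * ∑ i ∈ Sᶜ, l i ≤ 1 / 2 := by
  by_contra! H
  have key : ∀ k ≤ n, ∃ S : Finset ι, S.card = k ∧ o ∉ S ∧ (∀ i ∈ S, 0 < l i) ∧
      ∏ i ∈ S, ⌈2 / l i⌉₊ ≤ (4 * (n + 1)) ^ (2 ^ k - 1) := by
    intro k
    induction k with
    | zero => intro _; exact ⟨∅, by simp⟩
    | succ k ih =>
      intro hk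
      obtain ⟨S, hc, hoS, hp, hP⟩ := ih (by omega)
      have h1 := H S hoS hp
      set B : ℕ := (4 * (n + 1)) ^ (2 ^ k - 1) with hB
      have hBpos : (0 : ℝ) < B := by rw [hB]; positivity
      have hPR : ((∏ i ∈ S, ⌈2 / l i⌉₊ : ℕ) : ℝ) ≤ B := by exact_mod_cast hP
      have hexp : 2 ^ (k + 1) - 1 = (2 ^ k - 1) + (2 ^ k - 1) + 1 := by
        have := Nat.one_le_two_pow (n := k); rw [pow_succ]; omega
      have hsucc : (4 * (n + 1)) ^ (2 ^ (k + 1) - 1) = B * (4 * (n + 1) * B) := by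
        rw [hexp, pow_succ, pow_add, hB]; ring
      have hsum : 1 / 2 < (B : ℝ) * ∑ i ∈ Sᶜ, l i :=
        h1.trans_le (mul_le_mul_of_nonneg_right hPR (Finset.sum_nonneg fun i _ => hl i))
      obtain ⟨i, hi, hli⟩ : ∃ i ∈ Sᶜ, 1 / (2 * B * (n + 1)) < l i := by
        by_contra! hcon
        have h2 := Finset.sum_le_card_nsmul _ _ _ hcon
        have h3 : ((Sᶜ).card : ℝ) ≤ n + 1 := by
          have := Finset.card_le_univ Sᶜ
          rw [hn] at this; exact_mod_cast this
        rw [nsmul_eq_mul] at h2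
        have h4 : (B : ℝ) * ∑ i ∈ Sᶜ, l i ≤ B * ((n + 1) * (1 / (2 * B * (n + 1)))) :=
          mul_le_mul_of_nonneg_left (h2.trans (mul_le_mul_of_nonneg_right h3 (by positivity)))
            hBpos.le
        have h5 : (B : ℝ) * ((n + 1) * (1 / (2 * B * (n + 1)))) = 1 / 2 := by field_simp
        linarith
      rw [Finset.mem_compl] at hi
      have hipos : 0 < l i := lt_trans (by positivity) hli
      have hM : 1 < l i * (2 * B * (n + 1)) := by
        rwa [div_lt_iff₀ (by positivity)] at hli
      -- `l i` exceeds the assumed bound on `l o`, since `2 B (n + 1)` is at most the next bound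
      have hio : i ≠ o := by
        rintro rfl
        have hmono : (4 * (n + 1)) ^ (2 ^ (k + 1) - 1) ≤ (4 * (n + 1)) ^ (2 ^ n - 1) :=
          Nat.pow_le_pow_right (by omega)
            (Nat.sub_le_sub_right (Nat.pow_le_pow_right (by norm_num) hk) 1)
        have hB1 : 1 ≤ B := Nat.one_le_iff_ne_zero.2 (by rw [hB]; positivity)
        have h6 : 2 * B * (n + 1) ≤ 2 * (4 * (n + 1)) ^ (2 ^ n - 1) := by
          rw [hsucc] at hmono
          have h8 : (n + 1) * B ≤ (n + 1) * B * (4 * B) := Nat.le_mul_of_pos_right _ (by omega)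
          nlinarith
        have h7 : (2 * B * (n + 1) : ℝ) ≤ 2 * ((4 * (n + 1)) ^ (2 ^ n - 1) : ℕ) := by
          exact_mod_cast h6
        nlinarith
      refine ⟨insert i S, by rw [Finset.card_insert_of_notMem hi, hc], ?_, ?_, ?_⟩
      · simp [hoS, hio.symm]
      · intro a ha
        rcases Finset.mem_insert.1 ha with rfl | ha
        exacts [hipos, hp a ha]
      · rw [Finset.prod_insert hi, hsucc, mul_comm]
        refine Nat.mul_le_mul hP (Nat.ceil_le.2 ?_)
        rw [div_le_iff₀ hipos]; push_cast; nlinarith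
  -- now `o` is the only coordinate left, and the failure of `S` contradicts `hsmall`
  obtain ⟨S, hc, hoS, hp, hP⟩ := key n le_rfl
  have hS : Sᶜ = {o} := by
    symm
    apply Finset.eq_of_subset_of_card_le
    · simpa using hoS
    · rw [Finset.card_compl, hn, hc]; simp
  have h1 := H S hoS hp
  rw [hS, Finset.sum_singleton] at h1
  have hPR : ((∏ i ∈ S, ⌈2 / l i⌉₊ : ℕ) : ℝ) ≤ ((4 * (n + 1)) ^ (2 ^ n - 1) : ℕ) := by
    exact_mod_cast hP
  nlinarith

/-- If the weight of `o` is small, some multiple `(j + 1) * l` becomes again a weight vector after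
subtracting an integer vector that vanishes at `o`. The weight of `o` is thereby multiplied by
`j + 1 ≥ 2`. -/
theorem exists_multiple {ι : Type*} [Fintype ι] [DecidableEq ι] (o : ι) (n : ℕ)
    (hn : Fintype.card ι = n + 1) (l : ι → ℝ) (hl : ∀ i, 0 ≤ l i) (hsum : ∑ i, l i = 1)
    (ho : 0 < l o) (ho1 : l o < 1 / 2)
    (hsmall : 2 * ((4 * (n + 1)) ^ (2 ^ n - 1) : ℕ) * l o ≤ 1) :
    ∃ (j : ℕ) (m : ι → ℤ), 1 ≤ j ∧ m o = 0 ∧ ∑ i, m i = j ∧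
      (∀ i, 0 ≤ ((j : ℝ) + 1) * l i - m i) ∧ ((j : ℝ) + 1) * l o < 1 := by
  obtain ⟨S, hoS, hp, hP⟩ := exists_large_coords o n hn l hl ho hsmall
  obtain ⟨j, hj1, hjN, m, hm⟩ := dirichlet_box l (fun i => if i ∈ S then ⌈2 / l i⌉₊ else 1) (by
    intro i
    split_ifs with h
    · have := hp i h
      exact Nat.ceil_pos.2 (by positivity)
    · exact one_pos)
  rw [Finset.prod_ite_mem, Finset.univ_inter] at hjN
  have herr : ∀ i ∈ S, |(j : ℝ) * l i - m i| ≤ l i / 2 := by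
    intro i hi
    have h1 := hm i
    rw [if_pos hi] at h1
    have h0 := hp i hi
    refine h1.le.trans ?_
    rw [div_le_iff₀ (by exact_mod_cast Nat.ceil_pos.2 (by positivity))]
    have h2 := Nat.le_ceil (2 / l i)
    rw [div_le_iff₀ h0] at h2
    linarith
  have hrest : (j : ℝ) * ∑ i ∈ Sᶜ, l i ≤ 1 / 2 :=
    le_trans (mul_le_mul_of_nonneg_right (by exact_mod_cast hjN)
      (Finset.sum_nonneg fun i _ => hl i)) hP
  have hj0 : (0 : ℝ) ≤ j := Nat.cast_nonneg j
  have hoc : l o ≤ ∑ i ∈ Sᶜ, l i :=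
    Finset.single_le_sum (fun i _ => hl i) (Finset.mem_compl.2 hoS)
  have hsplit : ∑ i ∈ S, l i + ∑ i ∈ Sᶜ, l i = 1 := by rw [Finset.sum_add_sum_compl, hsum]
  refine ⟨j, fun i => if i ∈ S then m i else 0, hj1, if_neg hoS, ?_, ?_, ?_⟩
  · -- the defect is an integer of absolute value less than `1`
    have hdef : |((j : ℤ) - ∑ i, (if i ∈ S then m i else 0) : ℤ)| < 1 := by
      rw [Finset.sum_ite_mem, Finset.univ_inter]
      have e : (((j : ℤ) - ∑ i ∈ S, m i : ℤ) : ℝ)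
          = ∑ i ∈ S, ((j : ℝ) * l i - m i) + j * ∑ i ∈ Sᶜ, l i := by
        rw [Finset.sum_sub_distrib, ← Finset.mul_sum]; push_cast
        linear_combination (-(j : ℝ)) * hsplit
      have hb : |∑ i ∈ S, ((j : ℝ) * l i - m i)| ≤ (∑ i ∈ S, l i) / 2 := by
        rw [Finset.sum_div]
        exact (Finset.abs_sum_le_sum_abs _ _).trans (Finset.sum_le_sum herr)
      have hr0 : 0 ≤ (j : ℝ) * ∑ i ∈ Sᶜ, l i := by
        refine mul_nonneg hj0 (Finset.sum_nonneg fun i _ => hl i)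
      have : |(((j : ℤ) - ∑ i ∈ S, m i : ℤ) : ℝ)| < 1 := by
        rw [e, abs_lt]
        rw [abs_le] at hb
        constructor <;> linarith
      exact_mod_cast this
    rw [Int.abs_lt_one_iff] at hdef
    exact (sub_eq_zero.1 hdef).symm
  · intro i
    by_cases hi : i ∈ S
    · have := abs_le.1 (herr i hi)
      have := hp i hi
      simp only [hi, if_true]
      linarith
    · simp only [hi, if_false, Int.cast_zero, sub_zero]
      have := hl i
      positivity
  · nlinarith [mul_le_mul_of_nonneg_left hoc hj0]

/-! ### Representing an interior lattice point -/

/-- Carathéodory's theorem for conic combinations, keeping the sum of the coefficients below `1`. -/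
theorem exists_small_conic {α V : Type*} [AddCommGroup V] [Module ℝ V] [FiniteDimensional ℝ V]
    (f : α → V) (p : V) (T : Finset α) :
    ∀ l : α → ℝ, (∀ a ∈ T, 0 ≤ l a) → ∑ a ∈ T, l a < 1 → ∑ a ∈ T, l a • f a = p →
    ∃ S ⊆ T, S.card ≤ Module.finrank ℝ V ∧ ∃ l' : α → ℝ, (∀ a ∈ S, 0 ≤ l' a) ∧
      ∑ a ∈ S, l' a < 1 ∧ ∑ a ∈ S, l' a • f a = p := by
  classical
  induction T using Finset.strongInduction with
  | H T ih =>
  intro l hl hlt hp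
  by_cases hT : T.card ≤ Module.finrank ℝ V
  · exact ⟨T, subset_rfl, hT, l, hl, hlt, hp⟩
  -- a linear relation with nonnegative coefficient sum: subtracting it does not raise the sum
  obtain ⟨g, hg0, b, hbT, hb, hgs⟩ : ∃ g : α → ℝ, ∑ a ∈ T, g a • f a = 0 ∧ ∃ b ∈ T, g b ≠ 0 ∧
      0 ≤ ∑ a ∈ T, g a := by
    have hdep : ¬ LinearIndepOn ℝ f (T : Set α) := by
      intro h
      have := LinearIndependent.fintype_card_le_finrank h
      simp at this
      exact hT this
    rw [linearIndepOn_finset_iff] at hdep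
    push Not at hdep
    obtain ⟨g, hg, b, hb, hgb⟩ := hdep
    rcases le_total 0 (∑ a ∈ T, g a) with h | h
    · exact ⟨g, hg, b, hb, hgb, h⟩
    · refine ⟨-g, ?_, b, hb, ?_, ?_⟩
      · simp [hg]
      · simpa using hgb
      · simpa using h
  have hpos : (T.filter fun a => 0 < g a).Nonempty := by
    by_contra hne
    rw [Finset.not_nonempty_iff_eq_empty, Finset.filter_eq_empty_iff] at hne
    have hle : ∀ a ∈ T, g a ≤ 0 := fun a ha => not_lt.1 (hne ha)
    have h0 : ∑ a ∈ T, g a = 0 := le_antisymm (Finset.sum_nonpos hle) hgs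
    exact hb ((Finset.sum_eq_zero_iff_of_nonpos hle).1 h0 b hbT)
  obtain ⟨c, hc, hmin⟩ := Finset.exists_min_image _ (fun a => l a / g a) hpos
  rw [Finset.mem_filter] at hc
  obtain ⟨hcT, hgc⟩ := hc
  -- the largest multiple of the relation that keeps all coefficients nonnegative kills that of `c`
  set t := l c / g c with ht
  have ht0 : 0 ≤ t := div_nonneg (hl c hcT) hgc.le
  have hzero : l c - t * g c = 0 := by rw [ht]; field_simp; ring
  have hih := ih (T.erase c) (Finset.erase_ssubset hcT)
    (fun a => l a - t * g a) ?_ ?_ ?_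
  · obtain ⟨S, hS, hcard, h⟩ := hih
    exact ⟨S, hS.trans (Finset.erase_subset _ _), hcard, h⟩
  · intro a ha
    have haT := Finset.mem_of_mem_erase ha
    rcases lt_or_ge 0 (g a) with h | h
    · have := hmin a (Finset.mem_filter.2 ⟨haT, h⟩)
      rw [le_div_iff₀ h] at this
      linarith
    · have := hl a haT
      nlinarith
  · rw [Finset.sum_erase T hzero, Finset.sum_sub_distrib, ← Finset.mul_sum]
    nlinarith
  · rw [Finset.sum_erase T (by rw [hzero, zero_smul])]
    simp only [sub_smul, mul_smul, Finset.sum_sub_distrib, ← Finset.smul_sum, hg0, hp]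
    simp

/-! ### Comparison with the Sylvester sequence -/

theorem sylv_sub_one_pow_four_le (d : ℕ) : (sylv d - 1) ^ 4 ≤ sylv (d + 2) - 1 := by
  have h : ∀ k, (sylv k - 1) ^ 2 ≤ sylv (k + 1) - 1 := by
    intro k
    simp only [sylv, Nat.add_sub_cancel]
    rw [pow_two]
    exact Nat.mul_le_mul_right _ (Nat.sub_le _ _)
  calc (sylv d - 1) ^ 4 = ((sylv d - 1) ^ 2) ^ 2 := by ring
    _ ≤ (sylv (d + 1) - 1) ^ 2 := Nat.pow_le_pow_left (h d) 2
    _ ≤ _ := h (d + 1)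

/-- For `d ≤ 2` this inequality fails; those cases of `two_mul_pow_le_cSylv` need the exact
constants. -/
theorem pow_le_sylv (d : ℕ) (hd : 3 ≤ d) : (4 * (d + 1)) ^ 2 ^ d ≤ sylv (2 * d) - 1 := by
  induction d, hd using Nat.le_induction with
  | base => norm_num [sylv]
  | succ d hd ih =>
    calc (4 * (d + 1 + 1)) ^ 2 ^ (d + 1) ≤ ((4 * (d + 1)) ^ 2) ^ 2 ^ (d + 1) :=
          Nat.pow_le_pow_left (by nlinarith) _
      _ = ((4 * (d + 1)) ^ 2 ^ d) ^ 4 := by rw [← pow_mul, ← pow_mul]; ring_nf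
      _ ≤ (sylv (2 * d) - 1) ^ 4 := Nat.pow_le_pow_left ih 4
      _ ≤ _ := sylv_sub_one_pow_four_le (2 * d)

theorem two_mul_pow_le_cSylv (n d : ℕ) (hd : 1 ≤ d) (hnd : n ≤ d) :
    2 * (4 * (n + 1)) ^ (2 ^ n - 1) ≤ cSylv d + 1 := by
  have hmono : (4 * (n + 1)) ^ (2 ^ n - 1) ≤ (4 * (d + 1)) ^ (2 ^ d - 1) :=
    (Nat.pow_le_pow_left (by omega) _).trans (Nat.pow_le_pow_right (by omega)
      (Nat.sub_le_sub_right (Nat.pow_le_pow_right (by norm_num) hnd) 1))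
  refine (Nat.mul_le_mul_left 2 hmono).trans ?_
  rcases (by omega : d = 1 ∨ d = 2 ∨ 3 ≤ d) with rfl | rfl | h
  · norm_num [cSylv, sylv]
  · norm_num [cSylv, sylv]
  · have h1 := pow_le_sylv d h
    have h2 : (4 * (d + 1)) ^ (2 ^ d - 1) ≤ (4 * (d + 1)) ^ 2 ^ d :=
      Nat.pow_le_pow_right (by omega) (Nat.sub_le _ _)
    have h3 : 2 ≤ d * (2 * d + 1) := by nlinarith
    unfold cSylv
    have := Nat.mul_le_mul h3 (h2.trans h1)
    omega

/-! ### Lattice points with a large weight on the observer -/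

/-- If some lattice point is a convex combination of the lattice points `v i` with weight strictly
between `0` and `1` on `v o`, then some lattice point is such a combination with weight bounded
below in terms of the number of points alone. -/
theorem exists_large_coefficient {d : ℕ} {ι : Type*} [Fintype ι] [DecidableEq ι] (o : ι) (n : ℕ)
    (hn : Fintype.card ι = n + 1) (hn1 : 1 ≤ n) (v : ι → Fin d → ℤ) (w : Fin d → ℤ) (l : ι → ℝ)
    (hl : ∀ i, 0 ≤ l i) (hsum : ∑ i, l i = 1) (ho : 0 < l o) (ho1 : l o < 1)
    (hw : ∑ i, l i • ZtoR (v i) = ZtoR w) :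
    ∃ (l' : ι → ℝ) (w' : Fin d → ℤ), (∀ i, 0 ≤ l' i) ∧ ∑ i, l' i = 1 ∧ l' o < 1 ∧
      1 < 2 * ((4 * (n + 1)) ^ (2 ^ n - 1) : ℕ) * l' o ∧
      ∑ i, l' i • ZtoR (v i) = ZtoR w' := by
  by_contra! H
  -- the attainable weights of `o`; a member above half the supremum would double beyond it
  let A : Set ℝ := {t | ∃ (l : ι → ℝ) (w : Fin d → ℤ), (∀ i, 0 ≤ l i) ∧ ∑ i, l i = 1 ∧
    0 < l o ∧ l o < 1 ∧ ∑ i, l i • ZtoR (v i) = ZtoR w ∧ t = l o}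
  have hA : A.Nonempty := ⟨l o, l, w, hl, hsum, ho, ho1, hw, rfl⟩
  have hbdd : BddAbove A := ⟨1, by rintro _ ⟨l, w, -, -, -, h, -, rfl⟩; exact h.le⟩
  have hspos : 0 < sSup A := ho.trans_le (le_csSup hbdd ⟨l, w, hl, hsum, ho, ho1, hw, rfl⟩)
  obtain ⟨_, ⟨a, w, ha, hasum, hao, hao1, haw, rfl⟩, hlt⟩ :=
    exists_lt_of_lt_csSup hA (half_lt_self hspos)
  have hsmall : 2 * ((4 * (n + 1)) ^ (2 ^ n - 1) : ℕ) * a o ≤ 1 := by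
    by_contra hcon
    exact H a w ha hasum hao1 (not_le.1 hcon) haw
  have hhalf : a o < 1 / 2 := by
    have h1 : 1 < (4 * (n + 1)) ^ (2 ^ n - 1) := by
      refine Nat.one_lt_pow ?_ (by omega)
      have : 2 ^ 1 ≤ 2 ^ n := Nat.pow_le_pow_right (by norm_num) hn1
      omega
    have h2 : (1 : ℝ) < ((4 * (n + 1)) ^ (2 ^ n - 1) : ℕ) := by exact_mod_cast h1
    nlinarith
  obtain ⟨j, m, hj, hmo, hms, hnn, hlt1⟩ := exists_multiple o n hn a ha hasum hao hhalf hsmall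
  have hj' : (1 : ℝ) ≤ j := by exact_mod_cast hj
  have hmem : ((j : ℝ) + 1) * a o ∈ A := by
    refine ⟨fun i => ((j : ℝ) + 1) * a i - m i, ((j : ℤ) + 1) • w - ∑ i, m i • v i, hnn, ?_, ?_,
      ?_, ?_, ?_⟩
    · rw [Finset.sum_sub_distrib, ← Finset.mul_sum, hasum]
      have : ((∑ i, m i : ℤ) : ℝ) = j := by rw [hms]; simp
      push_cast at this
      linarith
    · simp only [hmo, Int.cast_zero, sub_zero]; positivity
    · simpa [hmo] using hlt1
    · ext k
      have := congrFun haw k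
      simp only [Finset.sum_apply, Pi.smul_apply, smul_eq_mul, ZtoR] at this
      simp only [Finset.sum_apply, Pi.smul_apply, Pi.sub_apply, smul_eq_mul, ZtoR, sub_mul,
        Finset.sum_sub_distrib, mul_assoc, ← Finset.mul_sum, this]
      push_cast
      ring
    · simp [hmo]
  have := le_csSup hbdd hmem
  nlinarith

/-- An interior lattice point `z` is a convex combination of `y` and at most `d` points of `X` with
positive weight `1 - ∑ x ∈ S, l x` on `y`. -/
theorem exists_representation {d : ℕ} (X : Set (Fin d → ℤ)) (hfin : X.Finite)
    (y z : Fin d → ℤ) (hz : ZtoR z ∈ interior (convexHull ℝ (ZtoR '' X))) :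
    ∃ S : Finset (Fin d → ℤ), (S : Set (Fin d → ℤ)) ⊆ X ∧ S.card ≤ d ∧ ∃ l : (Fin d → ℤ) → ℝ,
      (∀ x ∈ S, 0 ≤ l x) ∧ ∑ x ∈ S, l x < 1 ∧
      ∑ x ∈ S, l x • (ZtoR x - ZtoR y) = ZtoR z - ZtoR y := by
  classical
  -- push `z` slightly away from `y`, staying inside the convex hull
  obtain ⟨ε, hε, hmem⟩ : ∃ ε : ℝ, 0 < ε ∧
      ZtoR z + ε • (ZtoR z - ZtoR y) ∈ convexHull ℝ (ZtoR '' X) := by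
    have hc : Continuous fun t : ℝ => ZtoR z + t • (ZtoR z - ZtoR y) := by fun_prop
    have h0 : ∀ᶠ t in nhds (0 : ℝ),
        ZtoR z + t • (ZtoR z - ZtoR y) ∈ interior (convexHull ℝ (ZtoR '' X)) :=
      hc.continuousAt.eventually (isOpen_interior.mem_nhds (by simpa using hz))
    obtain ⟨ε, h1, h2⟩ := ((h0.filter_mono nhdsWithin_le_nhds).and
      (self_mem_nhdsWithin : Set.Ioi (0 : ℝ) ∈ nhdsWithin 0 (Set.Ioi 0))).exists
    exact ⟨ε, h2, interior_subset h1⟩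
  have hinj : Function.Injective (ZtoR (d := d)) := fun a b h => by
    ext i; have := congrFun h i; simpa [ZtoR] using this
  obtain ⟨T, rfl⟩ := hfin.exists_finset_coe
  rw [← Finset.coe_image, Finset.mem_convexHull'] at hmem
  obtain ⟨u, hu0, hu1, hu⟩ := hmem
  rw [Finset.sum_image hinj.injOn] at hu1 hu
  have hε1 : (0 : ℝ) < 1 + ε := by linarith
  have hsmall := exists_small_conic (fun x => ZtoR x - ZtoR y)
    (ZtoR z - ZtoR y) T (fun x => (1 + ε)⁻¹ * u (ZtoR x)) ?_ ?_ ?_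
  · obtain ⟨S, hST, hcard, l, h⟩ := hsmall
    exact ⟨S, by exact_mod_cast hST, by simpa using hcard, l, h⟩
  · intro x hx
    exact mul_nonneg (inv_nonneg.2 hε1.le) (hu0 _ (Finset.mem_image_of_mem _ hx))
  · rw [← Finset.mul_sum, hu1, mul_one]
    exact inv_lt_one_of_one_lt₀ (by linarith)
  · simp only [mul_smul, ← Finset.smul_sum, smul_sub, Finset.sum_sub_distrib, ← Finset.sum_smul,
      hu, hu1]
    rw [← smul_sub, inv_smul_eq_iff₀ hε1.ne']
    module

/-! ### Bounding the observers -/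

theorem mem_of_mem_obs {d : ℕ} (X : Set (Fin d → ℤ))
    (hfin : X.Finite) (hlc : IsLatticeConvex X)
    (hint : ∃ z : Fin d → ℤ, ZtoR z ∈ interior (convexHull ℝ (ZtoR '' X))) (y : Fin d → ℤ)
    (hy : y ∈ obs X) :
    ZtoR y ∈ ZtoR '' X + (cSylv d : ℝ) • convexHull ℝ (ZtoR '' X - ZtoR '' X) := by
  classical
  obtain ⟨hyX, hyc⟩ := hy
  obtain ⟨z, hz⟩ := hint
  have hzX : z ∈ X := hlc z (interior_subset hz)
  have hd : 1 ≤ d := by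
    rcases Nat.eq_zero_or_pos d with rfl | h
    · exact absurd (Subsingleton.elim y z ▸ hzX) hyX
    · exact h
  obtain ⟨S, hSX, hcard, l, hl0, hl1, hl⟩ := exists_representation X hfin y z hz
  -- if all weights on `S` vanished, `z` would equal `y`, which is not in `X`
  have hlpos : 0 < ∑ x ∈ S, l x := by
    refine lt_of_le_of_ne (Finset.sum_nonneg hl0) fun h0 => hyX ?_
    have h1 := (Finset.sum_eq_zero_iff_of_nonneg hl0).1 h0.symm
    rw [Finset.sum_eq_zero (fun x hx => by rw [h1 x hx, zero_smul])] at hl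
    have hzy : z = y := by
      ext i
      have := congrFun hl.symm i
      simp only [Pi.sub_apply, Pi.zero_apply, ZtoR, sub_eq_zero] at this
      exact_mod_cast this
    exact hzy ▸ hzX
  have hn1 : 1 ≤ S.card := by
    rw [Nat.one_le_iff_ne_zero]
    intro h
    rw [Finset.card_eq_zero.1 h, Finset.sum_empty] at hlpos
    exact hlpos.false
  -- the index `none` stands for the observer `y`
  let v : Option S → Fin d → ℤ := fun i => i.elim y Subtype.val
  obtain ⟨a, w, ha0, ha1, hao, hbig, haw⟩ := exists_large_coefficient (ι := Option S) none S.card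
    (by simp) hn1 v z (fun i => i.elim (1 - ∑ x ∈ S, l x) fun x => l x) (by
      rintro (_ | x)
      · simpa using hl1.le
      · exact hl0 x x.2) (by
      simp only [Fintype.sum_option, Option.elim]
      rw [Finset.sum_coe_sort S l]; ring) (by simpa using hl1) (by simpa using hlpos) (by
      simp only [Fintype.sum_option, Option.elim, v]
      rw [Finset.sum_coe_sort S (fun x => l x • ZtoR x)]
      simp only [smul_sub, Finset.sum_sub_distrib, ← Finset.sum_smul] at hl
      rw [eq_add_of_sub_eq hl]
      module)
  simp only [Fintype.sum_option, v, Option.elim] at ha1 haw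
  have hapos : 0 < a none := by
    by_contra hcon
    have : (0 : ℝ) ≤ ((4 * (S.card + 1)) ^ (2 ^ S.card - 1) : ℕ) := Nat.cast_nonneg _
    nlinarith
  set p : Fin d → ℝ := (1 - a none)⁻¹ • ∑ x : S, a (some x) • ZtoR x.1 with hp
  have h1a : 0 < 1 - a none := by linarith
  have hpmem : p ∈ convexHull ℝ (ZtoR '' X) := by
    rw [hp, Finset.smul_sum]
    simp only [smul_smul]
    refine (convex_convexHull ℝ _).sum_mem (fun x _ => mul_nonneg (inv_nonneg.2 h1a.le) (ha0 _))
      ?_ (fun x _ => subset_convexHull ℝ _ ⟨x, hSX x.2, rfl⟩)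
    rw [← Finset.mul_sum, (by linarith : ∑ x : S, a (some x) = 1 - a none)]
    exact inv_mul_cancel₀ h1a.ne'
  have hsp : ∑ x : S, a (some x) • ZtoR x.1 = (1 - a none) • p := by
    rw [hp, smul_inv_smul₀ h1a.ne']
  rw [hsp] at haw
  have hwX : w ∈ X := by
    have hw : w ∈ X ∪ {y} := by
      apply hyc
      rw [← haw]
      have hymem : ZtoR y ∈ convexHull ℝ (ZtoR '' (X ∪ {y})) :=
        subset_convexHull ℝ _ ⟨y, by simp, rfl⟩
      exact convex_convexHull ℝ _ hymem
        (convexHull_mono (Set.image_mono Set.subset_union_left) hpmem) hapos.le h1a.le (by ring)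
    rcases hw with hw | hw
    · exact hw
    · -- `w = y` would force `y = p`, a point of the convex hull of `X`
      rw [Set.mem_singleton_iff.1 hw] at haw
      have hpy : ZtoR y = p := by
        have h2 : (1 - a none) • ZtoR y = (1 - a none) • p := by
          rw [sub_smul, one_smul, sub_eq_iff_eq_add, add_comm]; exact haw.symm
        exact smul_right_injective _ h1a.ne' h2
      exact absurd (hlc y (hpy ▸ hpmem)) hyX
  -- `y - w` is the multiple of `w - p` by the factor `1 / a none - 1`, which is at most `c_d`
  have hcbound : 1 < ((cSylv d : ℝ) + 1) * a none := by
    have h2 : ((2 * (4 * (S.card + 1)) ^ (2 ^ S.card - 1) : ℕ) : ℝ) ≤ (cSylv d + 1 : ℕ) := by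
      exact_mod_cast two_mul_pow_le_cSylv S.card d hd hcard
    push_cast at h2 hbig
    nlinarith
  have hcpos : (0 : ℝ) < cSylv d := by nlinarith [Nat.cast_nonneg (α := ℝ) (cSylv d)]
  have hconv : ZtoR w - p ∈ convexHull ℝ (ZtoR '' X - ZtoR '' X) := by
    rw [convexHull_sub]
    exact Set.sub_mem_sub (subset_convexHull ℝ _ ⟨w, hwX, rfl⟩) hpmem
  have hzero : (0 : Fin d → ℝ) ∈ convexHull ℝ (ZtoR '' X - ZtoR '' X) :=
    subset_convexHull ℝ _ ⟨_, ⟨z, hzX, rfl⟩, _, ⟨z, hzX, rfl⟩, sub_self _⟩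
  have hscale := (convex_convexHull ℝ (ZtoR '' X - ZtoR '' X)).smul_mem_of_zero_mem hzero hconv
    (t := (1 - a none) / (a none * cSylv d))
    ⟨by positivity, by rw [div_le_one (by positivity)]; nlinarith⟩
  refine Set.mem_add.2 ⟨ZtoR w, ⟨w, hwX, rfl⟩, _, Set.smul_mem_smul_set hscale, ?_⟩
  rw [smul_smul, ← haw]
  ext i
  simp only [Pi.add_apply, Pi.smul_apply, Pi.sub_apply, smul_eq_mul]
  field_simp
  ring

/-- If `X ⊆ ℤ^d` is a finite lattice-convex set such that `conv(X)` contains an interior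
lattice point, then `obs(X) ⊆ X + c_d · conv(X − X)`; in particular `obs(X)` is finite. -/
theorem obs_subset_of_interior_lattice_point {d : ℕ} (X : Set (Fin d → ℤ))
    (hfin : X.Finite) (hlc : IsLatticeConvex X)
    (hint : ∃ z : Fin d → ℤ, ZtoR z ∈ interior (convexHull ℝ (ZtoR '' X))) :
    obs X ⊆ {z | ZtoR z ∈
        ZtoR '' X + (cSylv d : ℝ) • convexHull ℝ (ZtoR '' X - ZtoR '' X)} ∧
    (obs X).Finite := by
  have hsub : obs X ⊆ {z | ZtoR z ∈
      ZtoR '' X + (cSylv d : ℝ) • convexHull ℝ (ZtoR '' X - ZtoR '' X)} :=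
    fun y hy => mem_of_mem_obs X hfin hlc hint y hy
  refine ⟨hsub, Set.Finite.subset ?_ hsub⟩
  have hb : Bornology.IsBounded
      (ZtoR '' X + (cSylv d : ℝ) • convexHull ℝ (ZtoR '' X - ZtoR '' X)) := by
    have h1 := (hfin.image ZtoR).isBounded
    have h2 := ((hfin.image ZtoR).sub (hfin.image ZtoR)).isBounded
    exact h1.add ((isBounded_convexHull.2 h2).smul₀ _)
  obtain ⟨R, hR⟩ := hb.subset_closedBall 0
  refine (Set.finite_Icc (fun _ : Fin d => -⌈R⌉) fun _ => ⌈R⌉).subset fun x hx => ?_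
  have h3 : ‖ZtoR x‖ ≤ R := by simpa using hR hx
  have h4 : ∀ i, |(x i : ℝ)| ≤ ⌈R⌉ := fun i =>
    ((norm_le_pi_norm (ZtoR x) i).trans h3).trans (Int.le_ceil R)
  refine ⟨fun i => ?_, fun i => ?_⟩
  · have := (abs_le.1 (h4 i)).1
    exact_mod_cast this
  · have := (abs_le.1 (h4 i)).2
    exact_mod_cast this
end

section
/- Let X ⊆ Z^3 be a full-dimensional finite lattice-convex set admitting a lattice-width direction u ∈ Z^3 \ {0} with w(X) = w(X,u) = 1 such that both supporting lattice planes X ∩ H_u^+ and X ∩ H_u^- of conv(X) in direction u and −u intersect X in one-dimensional sets. Then conv(X) is a tetrahedron and rc(X) = 4. -/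
/-! ### The tetrahedron -/

/-- A nonempty finite set whose affine span is a line lies on the segment joining two of its
points. -/
lemma exists_segment (S : Set (Fin 3 → ℤ)) (hS : S.Finite) (hne : S.Nonempty)
    (h : Module.finrank ℝ (affineSpan ℝ (ZtoR '' S)).direction = 1) :
    ∃ a ∈ S, ∃ b ∈ S, ZtoR '' S ⊆ convexHull ℝ {ZtoR a, ZtoR b} := by
  rw [direction_affineSpan] at h
  have hc : Collinear ℝ (ZtoR '' S) := collinear_iff_finrank_le_one.2 h.le
  obtain ⟨p₀, v, hv⟩ := (collinear_iff_exists_forall_eq_smul_vadd _).1 hc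
  have hv' : ∀ x : Fin 3 → ℤ, ∃ r : ℝ, x ∈ S → ZtoR x = r • v + p₀ := by
    intro x
    by_cases hx : x ∈ S
    · obtain ⟨r, hr⟩ := hv _ (Set.mem_image_of_mem _ hx)
      exact ⟨r, fun _ => hr⟩
    · exact ⟨0, fun h => absurd h hx⟩
  choose r hr using hv'
  obtain ⟨a, ha, hamin⟩ := hS.exists_minimalFor r S hne
  obtain ⟨b, hb, hbmax⟩ := hS.exists_maximalFor r S hne
  refine ⟨a, ha, b, hb, ?_⟩
  rintro _ ⟨x, hx, rfl⟩
  have h1 : r a ≤ r x := (le_total (r a) (r x)).elim id (fun h => hamin hx h)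
  have h2 : r x ≤ r b := (le_total (r x) (r b)).elim id (fun h => hbmax hx h)
  rw [convexHull_pair]
  have hseg : r x ∈ segment ℝ (r a) (r b) := by
    rw [segment_eq_Icc (h1.trans h2)]; exact ⟨h1, h2⟩
  obtain ⟨s, t, hs, ht, hst, hx'⟩ := hseg
  refine ⟨s, t, hs, ht, hst, ?_⟩
  rw [hr a ha, hr b hb, hr x hx, ← hx']
  have hp : p₀ = (s + t) • p₀ := by rw [hst, one_smul]
  conv_rhs => rw [hp]
  simp only [smul_eq_mul]
  module

/-! ### At least four inequalities -/

/-- Multiples of `d` rounded to lattice points have bounded images under a linear map killing `d`,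
so by pigeonhole infinitely many of their differences have small images. -/
lemma infinite_small_lattice_vectors (g : (Fin 3 → ℝ) →ₗ[ℝ] (Fin 4 → ℝ)) (d : Fin 3 → ℝ)
    (hd : d ≠ 0) (hg : g d = 0) :
    {w : Fin 3 → ℤ | ∀ i, |g (ZtoR w) i| ≤ 1}.Infinite := by
  obtain ⟨j, hj⟩ := Function.ne_iff.1 hd
  -- Scaling makes the `j`-th coordinate of `e` equal to `1`, so that `z` is injective.
  set e : Fin 3 → ℝ := (d j)⁻¹ • d with he
  have hej : e j = 1 := by simp [he, inv_mul_cancel₀ hj]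
  have hge : g e = 0 := by rw [he, map_smul, hg, smul_zero]
  let z : ℕ → Fin 3 → ℤ := fun n i => ⌊(n : ℝ) * e i⌋
  have hz : Function.Injective z := by
    intro a b hab
    have := congrFun hab j
    simpa [z, hej] using this
  let C := ‖LinearMap.toContinuousLinearMap g‖
  have hC : ∀ n i, |g (ZtoR (z n)) i| ≤ C := by
    intro n i
    have h1 : g (ZtoR (z n)) = - g ((n : ℝ) • e - ZtoR (z n)) := by
      rw [map_sub, map_smul, hge]; simp
    have h2 : ‖(n : ℝ) • e - ZtoR (z n)‖ ≤ 1 := by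
      rw [pi_norm_le_iff_of_nonneg zero_le_one]
      intro l
      have h3 := Int.fract_nonneg ((n : ℝ) * e l)
      have h4 := Int.fract_lt_one ((n : ℝ) * e l)
      simp only [Int.fract] at h3 h4
      simp only [Pi.sub_apply, Pi.smul_apply, smul_eq_mul, ZtoR, z, Real.norm_eq_abs]
      rw [abs_le]; constructor <;> linarith
    calc |g (ZtoR (z n)) i| ≤ ‖g (ZtoR (z n))‖ := norm_le_pi_norm (g (ZtoR (z n))) i
      _ = ‖LinearMap.toContinuousLinearMap g ((n : ℝ) • e - ZtoR (z n))‖ := by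
        rw [h1, norm_neg]; rfl
      _ ≤ C * ‖(n : ℝ) • e - ZtoR (z n)‖ := ContinuousLinearMap.le_opNorm _ _
      _ ≤ C := mul_le_of_le_one_right (norm_nonneg _) h2
  let Φ : ℕ → Set.Icc (fun _ : Fin 4 => ⌊-C⌋) (fun _ => ⌊C⌋) := fun n =>
    ⟨fun i => ⌊g (ZtoR (z n)) i⌋,
      fun i => Int.floor_le_floor (abs_le.1 (hC n i)).1,
      fun i => Int.floor_le_floor (abs_le.1 (hC n i)).2⟩
  obtain ⟨y, hy⟩ := Finite.exists_infinite_fiber Φ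
  have hy' : (Φ ⁻¹' {y}).Infinite := Set.infinite_coe_iff.1 hy
  obtain ⟨n₀, hn₀⟩ := hy'.nonempty
  have hinj : Set.InjOn (fun n => z n - z n₀) (Φ ⁻¹' {y}) :=
    fun a _ b _ hab => hz (sub_left_injective hab)
  refine (hy'.image hinj).mono ?_
  rintro _ ⟨n, hn, rfl⟩ i
  have hfl : ⌊g (ZtoR (z n)) i⌋ = ⌊g (ZtoR (z n₀)) i⌋ := by
    have : Φ n = Φ n₀ := hn.trans hn₀.symm
    exact congrFun (congrArg Subtype.val this) i
  have hs : ZtoR (z n - z n₀) = ZtoR (z n) - ZtoR (z n₀) := by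
    ext l; simp [ZtoR]
  simp only [hs, map_sub, Pi.sub_apply]
  exact (Int.abs_sub_lt_one_of_floor_eq_floor hfl).le

lemma sign_pattern (l : Fin 4 → ℝ) (j : Fin 4) (hj : l j = 0) :
    ∃ i, (∀ t, t ≠ i → 0 ≤ l t) ∨ (∀ t, t ≠ i → l t ≤ 0) := by
  by_contra! h
  have h0 := h 0
  have h1 := h 1
  have h2 := h 2
  have h3 := h 3
  simp only [Fin.exists_fin_succ] at h0 h1 h2 h3
  fin_cases j <;> simp_all <;> grind

/-- If `c` has total weight zero, small entries and one zero entry, then moving one of the values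
`F i` by `∑ c t * F t` or by its negative gives a convex combination of the values `F t`. The choice
of the value and of the sign depends on `c` only, so it serves all inequalities at once. -/
lemma exists_combination_le {k : ℕ} (c : Fin 4 → ℝ) (hsum : ∑ t, c t = 0) (hc : ∀ t, |c t| ≤ 1)
    (j : Fin 4) (hj : c j = 0) (F : Fin k → Fin 4 → ℝ) (b : Fin k → ℝ)
    (hF : ∀ r t, F r t ≤ b r) :
    ∃ i, (∀ r, F r i + ∑ t, c t * F r t ≤ b r) ∨ (∀ r, F r i - ∑ t, c t * F r t ≤ b r) := by
  have key : ∀ c' : Fin 4 → ℝ, ∑ t, c' t = 0 → (∀ t, |c' t| ≤ 1) → ∀ i,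
      (∀ t, t ≠ i → 0 ≤ c' t) → ∀ r, F r i + ∑ t, c' t * F r t ≤ b r := by
    intro c' hs ha i hi r
    have h1 : F r i + ∑ t, c' t * F r t = ∑ t, (c' t + if t = i then 1 else 0) * F r t := by
      simp [add_mul, Finset.sum_add_distrib, add_comm]
    have h2 : ∑ t, (c' t + if t = i then 1 else 0) * b r = b r := by
      rw [← Finset.sum_mul, Finset.sum_add_distrib, hs]; simp
    rw [h1, ← h2]
    refine Finset.sum_le_sum fun t _ => mul_le_mul_of_nonneg_left (hF r t) ?_
    split_ifs with ht
    · linarith [(abs_le.1 (ha t)).1]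
    · linarith [hi t ht]
  obtain ⟨i, hi | hi⟩ := sign_pattern c j hj
  · exact ⟨i, Or.inl (key c hsum hc i hi)⟩
  · refine ⟨i, Or.inr fun r => ?_⟩
    have := key (fun t => - c t) (by simp [hsum]) (by simpa using hc) i
      (fun t ht => by linarith [hi t ht]) r
    simpa [Finset.sum_neg_distrib, sub_eq_add_neg] using this

lemma coord_linear_eq (p : AffineBasis (Fin 4) ℝ (Fin 3 → ℝ)) (v : Fin 3 → ℝ) (i : Fin 4) :
    (p.coord i).linear v = p.coord i v - p.coord i 0 := by
  have h := (p.coord i).map_vadd 0 v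
  rw [vadd_eq_add, vadd_eq_add, add_zero] at h
  rw [h, add_sub_cancel_right]

lemma sum_coord_linear (p : AffineBasis (Fin 4) ℝ (Fin 3 → ℝ)) (v : Fin 3 → ℝ) :
    ∑ i, (p.coord i).linear v = 0 := by
  simp only [coord_linear_eq, Finset.sum_sub_distrib, p.sum_coord_apply_eq_one, sub_self]

lemma sum_coord_linear_smul (p : AffineBasis (Fin 4) ℝ (Fin 3 → ℝ)) (v : Fin 3 → ℝ) :
    ∑ i, (p.coord i).linear v • p i = v := by
  simp only [coord_linear_eq, sub_smul, Finset.sum_sub_distrib,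
    p.linear_combination_coord_eq_self, sub_zero]

lemma ZtoR_add {d : ℕ} (x y : Fin d → ℤ) : ZtoR (x + y) = ZtoR x + ZtoR y := by
  ext i; simp [ZtoR]

lemma ZtoR_sub {d : ℕ} (x y : Fin d → ℤ) : ZtoR (x - y) = ZtoR x - ZtoR y := by
  ext i; simp [ZtoR]

lemma four_le_of_isRelaxation (X : Set (Fin 3 → ℤ)) (hfin : X.Finite)
    (p : AffineBasis (Fin 4) ℝ (Fin 3 → ℝ)) (x : Fin 4 → Fin 3 → ℤ) (hx : ∀ i, x i ∈ X)
    (hp : ∀ i, p i = ZtoR (x i)) (k : ℕ) (hk : IsRelaxation X k) : 4 ≤ k := by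
  obtain ⟨m, A, b, U, v, hX⟩ := hk
  by_contra! hlt
  let f : (Fin 3 → ℝ) →ₗ[ℝ] (Fin k → ℝ) := Matrix.toLin' (Matrix.of A)
  let fU : (Fin 3 → ℝ) →ₗ[ℝ] (Fin m → ℝ) := Matrix.toLin' (Matrix.of U)
  have hxX : ∀ y ∈ X, (∀ r, f (ZtoR y) r ≤ b r) ∧ ∀ r, fU (ZtoR y) r = v r := by
    intro y hy; rw [hX] at hy; exact hy
  -- The equations hold at the affinely spanning points `p i`, hence everywhere.
  have hU : ∀ y, fU y = v := by
    intro y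
    have h1 := p.linear_combination_coord_eq_self y
    rw [← h1, map_sum]
    have h2 : ∀ i, fU (p i) = v := fun i => by
      rw [hp]; ext r; exact (hxX _ (hx i)).2 r
    simp only [map_smul, h2]
    rw [← Finset.sum_smul, p.sum_coord_apply_eq_one, one_smul]
  have hmem : ∀ y : Fin 3 → ℤ, (∀ r, f (ZtoR y) r ≤ b r) → y ∈ X := by
    intro y hy
    rw [hX]
    exact ⟨hy, fun r => congrFun (hU (ZtoR y)) r⟩
  by_cases hinj : Function.Injective f
  · have h3 : 3 ≤ k := by simpa using LinearMap.finrank_le_finrank_of_injective hinj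
    obtain rfl : k = 3 := by omega
    obtain ⟨d, hd⟩ := (LinearMap.injective_iff_surjective.1 hinj) (fun _ => -1)
    let z : ℕ → Fin 3 → ℤ := fun n i => ⌊(n : ℝ) * d i⌋
    let C := ‖LinearMap.toContinuousLinearMap f‖
    have hz : ∀ n r, f (ZtoR (z n)) r ≤ -n + C := by
      intro n r
      have h1 : f (ZtoR (z n)) = (fun _ => -(n : ℝ)) - f ((n : ℝ) • d - ZtoR (z n)) := by
        rw [map_sub, map_smul, hd]
        ext; simp
      have h2 : ‖(n : ℝ) • d - ZtoR (z n)‖ ≤ 1 := by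
        rw [pi_norm_le_iff_of_nonneg zero_le_one]
        intro l
        have h3 := Int.fract_nonneg ((n : ℝ) * d l)
        have h4 := Int.fract_lt_one ((n : ℝ) * d l)
        simp only [Int.fract] at h3 h4
        simp only [Pi.sub_apply, Pi.smul_apply, smul_eq_mul, ZtoR, z, Real.norm_eq_abs]
        rw [abs_le]; constructor <;> linarith
      have h5 : |f ((n : ℝ) • d - ZtoR (z n)) r| ≤ C :=
        calc _ ≤ ‖LinearMap.toContinuousLinearMap f ((n : ℝ) • d - ZtoR (z n))‖ :=
              norm_le_pi_norm (f ((n : ℝ) • d - ZtoR (z n))) r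
          _ ≤ C * ‖(n : ℝ) • d - ZtoR (z n)‖ := ContinuousLinearMap.le_opNorm _ _
          _ ≤ C := mul_le_of_le_one_right (norm_nonneg _) h2
      rw [h1, Pi.sub_apply]
      linarith [(abs_le.1 h5).1]
    obtain ⟨B, hB⟩ := (hfin.image fun y => f (ZtoR y) 0).bddBelow
    obtain ⟨n, hn⟩ := exists_nat_gt (max C (C + f (ZtoR (x 0)) 0 - B))
    have hn1 := (le_max_left _ _).trans_lt hn
    have hn2 := (le_max_right _ _).trans_lt hn
    have hin : x 0 + z n ∈ X := by
      refine hmem _ fun r => ?_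
      rw [ZtoR_add, map_add, Pi.add_apply]
      linarith [hz n r, (hxX _ (hx 0)).1 r]
    have h6 : B ≤ f (ZtoR (x 0 + z n)) 0 := hB ⟨_, hin, rfl⟩
    rw [ZtoR_add, map_add, Pi.add_apply] at h6
    linarith [hz n 0]
  · rw [← LinearMap.ker_eq_bot, Submodule.eq_bot_iff] at hinj
    push Not at hinj
    obtain ⟨d, hd, hd0⟩ := hinj
    rw [LinearMap.mem_ker] at hd
    have hj : ∃ j, (p.coord j).linear d ≠ 0 := by
      by_contra! h
      apply hd0
      rw [← sum_coord_linear_smul p d]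
      exact Finset.sum_eq_zero fun i _ => by rw [h, zero_smul]
    obtain ⟨j, hj⟩ := hj
    let μ : (Fin 3 → ℝ) →ₗ[ℝ] (Fin 4 → ℝ) := LinearMap.pi fun i => (p.coord i).linear
    have hμ : ∀ y i, μ y i = (p.coord i).linear y := fun y i => rfl
    -- Subtracting the multiple of `d` that cancels the `j`-th weight.
    let π : (Fin 3 → ℝ) →ₗ[ℝ] (Fin 3 → ℝ) :=
      LinearMap.id - ((p.coord j).linear.smulRight (((p.coord j).linear d)⁻¹ • d))
    have hπ : ∀ y, π y = y - (p.coord j).linear y • (((p.coord j).linear d)⁻¹ • d) :=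
      fun y => rfl
    have hπd : π d = 0 := by rw [hπ, smul_smul, mul_inv_cancel₀ hj, one_smul, sub_self]
    have hfπ : ∀ y, f (π y) = f y := by
      intro y; rw [hπ, map_sub, map_smul, map_smul, hd]; simp
    have hinf := infinite_small_lattice_vectors (μ ∘ₗ π) d hd0 (by simp [hπd])
    refine hinf ((hfin.image2 (fun a b => a - b) hfin).subset ?_)
    intro w hw
    have hcj : μ (π (ZtoR w)) j = 0 := by
      rw [hμ, hπ, map_sub, map_smul, map_smul, smul_eq_mul, smul_eq_mul,
        inv_mul_cancel₀ hj, mul_one, sub_self]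
    have hsum : ∀ r, ∑ t, μ (π (ZtoR w)) t * f (ZtoR (x t)) r = f (ZtoR w) r := by
      intro r
      rw [← hfπ (ZtoR w)]
      conv_rhs => rw [← sum_coord_linear_smul p (π (ZtoR w)), map_sum]
      simp [hμ, hp]
    obtain ⟨i, hi | hi⟩ := exists_combination_le (μ (π (ZtoR w))) (sum_coord_linear p _) hw j hcj
      (fun r t => f (ZtoR (x t)) r) b (fun r t => (hxX _ (hx t)).1 r)
    · refine ⟨x i + w, hmem _ fun r => ?_, x i, hx i, by simp⟩
      have := hi r
      rw [hsum] at this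
      rwa [ZtoR_add, map_add, Pi.add_apply]
    · refine ⟨x i, hx i, x i - w, hmem _ fun r => ?_, by simp⟩
      have := hi r
      rw [hsum] at this
      rwa [ZtoR_sub, map_sub, Pi.sub_apply]

/-! ### At most four inequalities -/

/-- The four inequalities state that the barycentric coordinates are nonnegative. -/
lemma isRelaxation_four (X : Set (Fin 3 → ℤ)) (hlc : IsLatticeConvex X)
    (p : AffineBasis (Fin 4) ℝ (Fin 3 → ℝ))
    (hconv : convexHull ℝ (ZtoR '' X) = convexHull ℝ (Set.range p)) : IsRelaxation X 4 := by
  refine ⟨0, fun i j => - (p.coord i).linear (Pi.single j 1), fun i => p.coord i 0,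
    Fin.elim0, Fin.elim0, ?_⟩
  have hcoord : ∀ (x : Fin 3 → ℤ) i,
      p.coord i (ZtoR x) = (∑ j, (p.coord i).linear (Pi.single j 1) * (x j : ℝ)) + p.coord i 0 := by
    intro x i
    have h1 := (p.coord i).map_vadd 0 (ZtoR x)
    simp only [vadd_eq_add, add_zero] at h1
    rw [h1]
    congr 1
    conv_lhs => rw [LinearMap.pi_apply_eq_sum_univ (p.coord i).linear (ZtoR x)]
    refine Finset.sum_congr rfl fun j _ => ?_
    have : (fun j' => if j = j' then (1 : ℝ) else 0) = Pi.single j 1 := by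
      ext j'; simp [Pi.single_apply, eq_comm]
    rw [this, smul_eq_mul, mul_comm, ZtoR]
  have hmem : ∀ x, x ∈ X ↔ ∀ i, 0 ≤ p.coord i (ZtoR x) := by
    intro x
    have h2 : ZtoR x ∈ convexHull ℝ (ZtoR '' X) ↔ ∀ i, 0 ≤ p.coord i (ZtoR x) := by
      rw [hconv, p.convexHull_eq_nonneg_coord]; rfl
    rw [← h2]
    exact ⟨fun h => subset_convexHull ℝ _ ⟨x, h, rfl⟩, hlc x⟩
  ext x
  rw [hmem, Set.mem_ofPred_eq, and_iff_left (fun i => i.elim0)]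
  refine forall_congr' fun i => ?_
  rw [hcoord]
  simp only [neg_mul, Finset.sum_neg_distrib]
  constructor <;> intro h <;> linarith

/-- Let `X ⊆ ℤ³` be a full-dimensional finite lattice-convex set with a lattice-width
direction `u` of width `1` (so `w(X) = w(X,u) = 1`) whose two supporting lattice planes
both meet `X` in one-dimensional sets (type `(1,1)`). Then `conv(X)` is a tetrahedron
and `rc(X) = 4`. -/
theorem rc_of_width_one_type_one_one (X : Set (Fin 3 → ℤ)) (hfin : X.Finite)
    (hlc : IsLatticeConvex X) (hfull : affineSpan ℝ (ZtoR '' X) = ⊤)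
    (u : Fin 3 → ℤ) (hu : u ≠ 0) (m : ℤ)
    (hw : ∀ x ∈ X, ∑ j, u j * x j = m ∨ ∑ j, u j * x j = m + 1)
    (hm : ∃ x ∈ X, ∑ j, u j * x j = m)
    (hm1 : ∃ x ∈ X, ∑ j, u j * x j = m + 1)
    (hwidth : ∀ v : Fin 3 → ℤ, v ≠ 0 → ∃ x ∈ X, ∃ y ∈ X, ∑ j, v j * x j ≠ ∑ j, v j * y j)
    (hdimPlus : Module.finrank ℝ
      (affineSpan ℝ (ZtoR '' {x ∈ X | ∑ j, u j * x j = m + 1})).direction = 1)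
    (hdimMinus : Module.finrank ℝ
      (affineSpan ℝ (ZtoR '' {x ∈ X | ∑ j, u j * x j = m})).direction = 1) :
    (∃ p : Fin 4 → Fin 3 → ℝ, AffineIndependent ℝ p ∧
      convexHull ℝ (ZtoR '' X) = convexHull ℝ (Set.range p)) ∧ rc X = 4 := by
  obtain ⟨a, ha, b, hb, hab⟩ := exists_segment _ (hfin.subset (Set.sep_subset _ _))
    (by obtain ⟨x, h1, h2⟩ := hm; exact ⟨x, h1, h2⟩) hdimMinus
  obtain ⟨c, hc, d, hd, hcd⟩ := exists_segment _ (hfin.subset (Set.sep_subset _ _))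
    (by obtain ⟨x, h1, h2⟩ := hm1; exact ⟨x, h1, h2⟩) hdimPlus
  let x : Fin 4 → Fin 3 → ℤ := ![a, b, c, d]
  let q : Fin 4 → Fin 3 → ℝ := fun i => ZtoR (x i)
  have hx : ∀ i, x i ∈ X := by
    intro i
    fin_cases i
    exacts [ha.1, hb.1, hc.1, hd.1]
  have hsub : ZtoR '' X ⊆ convexHull ℝ (Set.range q) := by
    rintro _ ⟨y, hy, rfl⟩
    rcases hw y hy with h | h
    · refine convexHull_mono ?_ (hab ⟨y, ⟨hy, h⟩, rfl⟩)
      rintro _ (rfl | rfl)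
      exacts [⟨0, rfl⟩, ⟨1, rfl⟩]
    · refine convexHull_mono ?_ (hcd ⟨y, ⟨hy, h⟩, rfl⟩)
      rintro _ (rfl | rfl)
      exacts [⟨2, rfl⟩, ⟨3, rfl⟩]
  have hsup : Set.range q ⊆ ZtoR '' X := by
    rintro _ ⟨i, rfl⟩
    exact ⟨x i, hx i, rfl⟩
  have hconv : convexHull ℝ (ZtoR '' X) = convexHull ℝ (Set.range q) :=
    (convexHull_min hsub (convex_convexHull ℝ _)).antisymm (convexHull_mono hsup)
  have hspan : affineSpan ℝ (Set.range q) = ⊤ := by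
    rw [← affineSpan_convexHull, ← hconv, affineSpan_convexHull, hfull]
  have hind : AffineIndependent ℝ q := by
    rw [affineIndependent_iff_finrank_vectorSpan_eq ℝ q (n := 3) (by simp),
      ← direction_affineSpan, hspan, AffineSubspace.direction_top, finrank_top]
    simp
  let p : AffineBasis (Fin 4) ℝ (Fin 3 → ℝ) := ⟨q, hind, hspan⟩
  have h4 : IsRelaxation X 4 := isRelaxation_four X hlc p hconv
  exact ⟨⟨q, hind, hconv⟩, le_antisymm (Nat.sInf_le h4) (le_csInf ⟨4, h4⟩ fun k hk =>
    four_le_of_isRelaxation X hfin p x hx (fun _ => rfl) k hk)⟩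
end
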